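/- arXiv:2304.10286 — 6 statements merged into one kernel-verified Lean document; each statement's English description precedes it below -/
import Mathlib

section
/- For the evolve function e of the first construction and all g ∈ G and particles p', p'' ∈ P: ₁e(₁e(g, p'), p'') = ₁e(₁e(g, p''), p') (order-independence of the evolve function with respect to the global variable). -/
/-- A deterministic one-tape Turing machine following Kozen:
states `Q` with distinguished `start`, `accept`, `reject`; tape alphabet `Γ`
with end marker `endm`, blank symbol `blank`, and input alphabet `inp ⊆ Γ`;
transition function `δ : Q → Γ → Q × Γ × ℤ` whose direction component lies
in `{-1, +1}`, which never overwrites the end marker (and moves right on it),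
and for which `accept` and `reject` are absorbing. -/
structure KTM (Q Γ : Type) where
  start : Q
  accept : Q
  reject : Q
  endm : Γ
  blank : Γ
  inp : Set Γ
  δ : Q → Γ → Q × Γ × ℤ
  accept_ne_reject : accept ≠ reject
  endm_not_inp : endm ∉ inp
  blank_not_inp : blank ∉ inp
  dir_valid : ∀ q a, (δ q a).2.2 = -1 ∨ (δ q a).2.2 = 1
  endm_rule : ∀ q, (δ q endm).2.1 = endm ∧ (δ q endm).2.2 = 1
  accept_absorb : ∀ a, (δ accept a).1 = accept
  reject_absorb : ∀ a, (δ reject a).1 = reject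

/-- A configuration of a Turing machine: the state, the semi-infinite tape
(positions `1, 2, 3, …`), and the head position. -/
abbrev Config (Q Γ : Type) : Type := Q × (ℕ → Γ) × ℕ

/-- The semi-infinite tape `x ␣^ω` determined by the finite string `x`
(1-based positions). -/
def tapeOf {Γ : Type} (blank : Γ) (x : List Γ) : ℕ → Γ := fun j => x.getD (j - 1) blank

namespace KTM
variable {Q Γ : Type}

/-- The next-configuration function of a Turing machine. -/
def nextConfig (T : KTM Q Γ) (c : Config Q Γ) : Config Q Γ :=
  ((T.δ c.1 (c.2.1 c.2.2)).1,
   Function.update c.2.1 c.2.2 (T.δ c.1 (c.2.1 c.2.2)).2.1,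
   ((c.2.2 : ℤ) + (T.δ c.1 (c.2.1 c.2.2)).2.2).toNat)

/-- The start configuration on input string `y`: state `start`,
tape `⊢ y ␣^ω`, head on the first cell. -/
def startConfig (T : KTM Q Γ) (y : List Γ) : Config Q Γ :=
  (T.start, tapeOf T.blank (T.endm :: y), 1)

end KTM

section PM
variable {P G : Type}

/-- One pairwise particle interaction: replace the `j`-th and `k`-th entries of
the particle tuple by the two components of `i g p_j p_k`. -/
def interOne (i : G → P → P → P × P) (g : G) (p : List P) (j k : ℕ) : List P :=
  match p[j]?, p[k]? with
  | some pj, some pk => (p.set j (i g pj pk).1).set k (i g pj pk).2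
  | _, _ => p

/-- Interaction of the `j`-th particle with all its neighbors (as listed by the
neighborhood function `u`), in order. -/
def interNbh (u : G × List P → ℕ → List ℕ) (i : G → P → P → P × P)
    (g : G) (p : List P) (j : ℕ) : List P :=
  (u (g, p) j).foldl (fun q k => interOne i g q j k) p

/-- The interaction phase of a particle method state transition step:
all particles interact with all their respective neighbors, in order. -/
def interPhase (u : G × List P → ℕ → List ℕ) (i : G → P → P → P × P)
    (g : G) (p : List P) : List P :=
  (List.range p.length).foldl (fun q j => interNbh u i g q j) p

/-- The evolution phase of a particle method state transition step: the global
variable is the left fold of `₁e` over the particles, and the new particle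
tuple is the concatenation of the `₂e` outputs of these same calls. -/
def evolvePhase (e : G → P → G × List P) (g : G) (p : List P) : G × List P :=
  p.foldl (fun acc pj => ((e acc.1 pj).1, acc.2 ++ (e acc.1 pj).2)) (g, [])

/-- One state transition step `s` of a particle method. -/
def pmStep (u : G × List P → ℕ → List ℕ) (i : G → P → P → P × P)
    (e : G → P → G × List P) (ge : G → G) : G × List P → G × List P :=
  fun st =>
    (ge (evolvePhase e st.1 (interPhase u i st.1 st.2)).1,
     (evolvePhase e st.1 (interPhase u i st.1 st.2)).2)

end PM

section C1
variable {Q Γ : Type}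

/-- Particle space of the first construction: a cell index and a tape symbol. -/
abbrev P1 (Γ : Type) : Type := ℕ × Γ

/-- Global-variable space of the first construction:
`(q, Δq, d, m, M)`. -/
abbrev G1 (Q : Type) : Type := Q × Q × ℤ × ℕ × ℕ

/-- Evolve function of the first construction. -/
def e1 [LinearOrder Q] (T : KTM Q Γ) (g : G1 Q) (p : P1 Γ) : G1 Q × List (P1 Γ) :=
  if p.1 = g.2.2.2.1 then
    if (g.2.2.2.1 : ℤ) + (T.δ g.1 p.2).2.2 ≤ (g.2.2.2.2 : ℤ) then
      ((g.1, max g.2.1 (T.δ g.1 p.2).1, max g.2.2.1 (T.δ g.1 p.2).2.2, g.2.2.2.1, g.2.2.2.2),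
       [(p.1, (T.δ g.1 p.2).2.1)])
    else
      ((g.1, max g.2.1 (T.δ g.1 p.2).1, max g.2.2.1 (T.δ g.1 p.2).2.2, g.2.2.2.1, g.2.2.2.2),
       [(p.1, (T.δ g.1 p.2).2.1), (p.1 + 1, T.blank)])
  else (g, [p])

/-- Evolve function of the global variable of the first construction. -/
def eg1 (T : KTM Q Γ) (g : G1 Q) : G1 Q :=
  if (g.2.2.2.2 : ℤ) < (g.2.2.2.1 : ℤ) + g.2.2.1 then
    (g.2.1, T.start, -1, ((g.2.2.2.1 : ℤ) + g.2.2.1).toNat, g.2.2.2.2 + 1)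
  else
    (g.2.1, T.start, -1, max 1 ((g.2.2.2.1 : ℤ) + g.2.2.1).toNat, g.2.2.2.2)

/-- Translation `ψ` of the first construction, applied to a configuration
`(q, x ␣^ω, n)` given by a finite string `x`. -/
def psi1 (T : KTM Q Γ) (q : Q) (x : List Γ) (n : ℕ) : G1 Q × List (P1 Γ) :=
  ((q, T.start, -1, n, x.length),
   (List.range x.length).map fun j => (j + 1, x.getD j T.blank))

/-- Back-translation `ψ⁻¹` of the first construction. -/
def psi1inv (T : KTM Q Γ) (st : G1 Q × List (P1 Γ)) : Config Q Γ :=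
  (st.1.1, tapeOf T.blank (st.2.map Prod.snd), st.1.2.2.2.1)

/-- Simulation invariant of the first construction: the back-translation of the
state is `α`, `M = |p|`, `m ≤ M`, `m` is the head position of `α`, `d = -1`,
`Δq = start`, and `k_j = j` for every particle. -/
def SimInv1 (T : KTM Q Γ) (st : G1 Q × List (P1 Γ)) (α : Config Q Γ) : Prop :=
  psi1inv T st = α ∧
  st.1.2.2.2.2 = st.2.length ∧
  st.1.2.2.2.1 ≤ st.1.2.2.2.2 ∧
  st.1.2.2.2.1 = α.2.2 ∧
  st.1.2.2.1 = -1 ∧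
  st.1.2.1 = T.start ∧
  ∀ j : Fin st.2.length, (st.2.get j).1 = (j : ℕ) + 1

end C1

section C2
variable {Q Γ : Type}

/-- Particle space of the second construction: `(z, h, Δh, o, Δo, a)`. -/
abbrev P2 (Γ : Type) : Type := Γ × ℤ × ℤ × ℤ × ℤ × ℤ

/-- Global-variable space of the second construction: `(q, Δq)`. -/
abbrev G2 (Q : Type) : Type := Q × Q

/-- The tape symbol `z` of a particle of the second construction. -/
def zOf (p : P2 Γ) : Γ := p.1
/-- The head marker `h` of a particle of the second construction. -/
def hOf (p : P2 Γ) : ℤ := p.2.1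
/-- The head-change marker `Δh` of a particle of the second construction. -/
def dhOf (p : P2 Γ) : ℤ := p.2.2.1
/-- The last head-move direction `o` of a particle of the second construction. -/
def oOf (p : P2 Γ) : ℤ := p.2.2.2.1
/-- The next head-move direction `Δo` of a particle of the second construction. -/
def doOf (p : P2 Γ) : ℤ := p.2.2.2.2.1
/-- The hand-over flag `a` of a particle of the second construction. -/
def aOf (p : P2 Γ) : ℤ := p.2.2.2.2.2

/-- Interact function of the second construction. -/
def i2 (T : KTM Q Γ) (g : G2 Q) (pj pk : P2 Γ) : P2 Γ × P2 Γ :=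
  if hOf pk = 1 ∧ ((hOf pj = -1 ∧ (T.δ g.1 pk.1).2.2 ≠ oOf pk) ∨
      (hOf pj = 0 ∧ (T.δ g.1 pk.1).2.2 = oOf pk)) then
    ((pj.1, hOf pj, 1, oOf pj, max (doOf pj) (T.δ g.1 pk.1).2.2, aOf pj), pk)
  else if hOf pj = 1 ∧ ((hOf pk = -1 ∧ (T.δ g.1 pj.1).2.2 ≠ oOf pj) ∨
      (hOf pk = 0 ∧ (T.δ g.1 pj.1).2.2 = oOf pj)) then
    ((pj.1, hOf pj, dhOf pj, oOf pj, doOf pj, 1), pk)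
  else (pj, pk)

/-- Evolve function of the second construction. -/
def e2 [LinearOrder Q] (T : KTM Q Γ) (g : G2 Q) (p : P2 Γ) : G2 Q × List (P2 Γ) :=
  if dhOf p = 1 then (g, [(p.1, 1, 0, doOf p, -1, 0)])
  else if dhOf p = 0 ∧ hOf p = -1 then (g, [(p.1, 0, 0, -1, -1, 0)])
  else if dhOf p = 0 ∧ hOf p = 1 ∧ aOf p = 1 then
    ((g.1, max g.2 (T.δ g.1 p.1).1), [((T.δ g.1 p.1).2.1, -1, 0, -1, -1, 0)])
  else if dhOf p = 0 ∧ hOf p = 1 ∧ aOf p = 0 then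
    ((g.1, max g.2 (T.δ g.1 p.1).1),
     [((T.δ g.1 p.1).2.1, -1, 0, -1, -1, 0), (T.blank, 1, 0, (T.δ g.1 p.1).2.2, -1, 0)])
  else (g, [p])

/-- Evolve function of the global variable of the second construction. -/
def eg2 (T : KTM Q Γ) (g : G2 Q) : G2 Q := (g.2, T.start)

/-- Neighborhood function of the second construction: the indices among
`(j-1, j+1)` that lie inside the particle tuple. -/
def u2 (st : G2 Q × List (P2 Γ)) (j : ℕ) : List ℕ :=
  (if 1 ≤ j then [j - 1] else []) ++ (if j + 1 < st.2.length then [j + 1] else [])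

/-- Stopping condition of the second construction. -/
def f2 [DecidableEq Q] (T : KTM Q Γ) (g : G2 Q) : Bool :=
  g.1 = T.reject ∨ g.1 = T.accept

/-- Translation `ψ` of the second construction, applied to a configuration
`(q, x ␣^ω, n)` given by a finite string `x`. -/
def psi2 (T : KTM Q Γ) (q : Q) (x : List Γ) (n : ℕ) : G2 Q × List (P2 Γ) :=
  ((q, T.start),
   (List.range x.length).map fun j =>
     (x.getD j T.blank, if j + 1 = n then 1 else if j + 1 = n + 1 then -1 else 0, 0, -1, -1, 0))

/-- Back-translation `ψ⁻¹` of the second construction: the head position is the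
unique (1-based) index of the particle with `h = 1`. -/
def psi2inv (T : KTM Q Γ) (st : G2 Q × List (P2 Γ)) : Config Q Γ :=
  (st.1.1, tapeOf T.blank (st.2.map fun p => p.1),
   st.2.findIdx (fun p => decide (hOf p = 1)) + 1)

/-- Simulation invariant of the second construction for a configuration `α`
with head position `n`: the back-translation of the state is `α`; the particle
at position `n` has `h = 1`, the particle at position `n - o_n` exists and has
`h = -1`, all other particles have `h = 0`; every particle has `Δh = 0`,
`Δo = -1`, and `a = 0`; and `Δq = start`. -/
def SimInv2 (T : KTM Q Γ) (st : G2 Q × List (P2 Γ)) (α : Config Q Γ) : Prop :=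
  psi2inv T st = α ∧
  ∃ hn : α.2.2 - 1 < st.2.length,
    hOf (st.2.get ⟨α.2.2 - 1, hn⟩) = 1 ∧
    (∃ k : Fin st.2.length,
      ((k : ℕ) + 1 : ℤ) = (α.2.2 : ℤ) - oOf (st.2.get ⟨α.2.2 - 1, hn⟩)) ∧
    (∀ j : Fin st.2.length,
      hOf (st.2.get j) =
        if (j : ℕ) + 1 = α.2.2 then 1
        else if ((j : ℕ) + 1 : ℤ) = (α.2.2 : ℤ) - oOf (st.2.get ⟨α.2.2 - 1, hn⟩) then -1
        else 0) ∧
    (∀ j : Fin st.2.length,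
      dhOf (st.2.get j) = 0 ∧ doOf (st.2.get j) = -1 ∧ aOf (st.2.get j) = 0) ∧
    st.1.2 = T.start

end C2

/-- The global component of `e1` only joins the new state and direction into the accumulators
`Δq` and `d`: appending a blank cell affects the particle tuple alone, and `q`, `m`, `M`, which
decide what is joined, are left unchanged. -/
theorem e1_fst {Q Γ : Type} [LinearOrder Q] (T : KTM Q Γ) (g : G1 Q) (p : P1 Γ) :
    (e1 T g p).1 =
      if p.1 = g.2.2.2.1 then
        (g.1, max g.2.1 (T.δ g.1 p.2).1, max g.2.2.1 (T.δ g.1 p.2).2.2, g.2.2.2.1, g.2.2.2.2)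
      else g := by
  unfold e1
  split_ifs <;> rfl

/-- The evolve function of the first construction is
order-independent with respect to the global variable:
`₁e(₁e(g, p'), p'') = ₁e(₁e(g, p''), p')`. -/
theorem e1_order_independent {Q Γ : Type} [LinearOrder Q] (T : KTM Q Γ)
    (hstart : ∀ q : Q, T.start ≤ q)
    (g : G1 Q) (p' p'' : P1 Γ) :
    (e1 T (e1 T g p').1 p'').1 = (e1 T (e1 T g p'').1 p').1 := by
  simp only [e1_fst]
  by_cases h' : p'.1 = g.2.2.2.1 <;> by_cases h'' : p''.1 = g.2.2.2.1 <;>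
    simp only [h', h'', if_true, if_false]
  -- Both particles sit under the head: the two joins commute.
  rw [max_right_comm g.2.1, max_right_comm g.2.2.1]
end

section
/- In the first construction, let N ≥ 1, let g = (q, start, -1, n, N) with 1 ≤ n ≤ N, and let p = (p_1, …, p_N) be a particle tuple with k_j = j for every j. Write (q̄_n, z̄_n, d̄_n) = δ(q, z_n). Then the left fold of ₁e over (p_1, …, p_N) starting at g equals (q, q̄_n, d̄_n, n, N). -/
/-- Folding `₁e` over particles none of which sits at the head position leaves the global variable
unchanged. -/
theorem foldl_e1_of_ne {Q Γ : Type} [LinearOrder Q] (T : KTM Q Γ) (g : G1 Q)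
    (l : List (P1 Γ)) (h : ∀ x ∈ l, x.1 ≠ g.2.2.2.1) :
    l.foldl (fun g pj => (e1 T g pj).1) g = g := by
  induction l with
  | nil => rfl
  | cons a l ih =>
    have ha : (e1 T g a).1 = g := by
      simp [e1, h a (by simp)]
    rw [List.foldl_cons, ha]
    exact ih fun x hx => h x (List.mem_cons_of_mem _ hx)

/-- In the first construction, for `g = (q, start, -1, n, N)`
with `1 ≤ n ≤ N` and a particle tuple `p` of length `N` with `k_j = j`, the
left fold of `₁e` over `p` starting at `g` equals `(q, q̄_n, d̄_n, n, N)`,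
where `(q̄_n, z̄_n, d̄_n) = δ(q, z_n)`. -/
theorem e1_fold_global {Q Γ : Type} [LinearOrder Q] (T : KTM Q Γ)
    (hstart : ∀ q : Q, T.start ≤ q)
    (q : Q) (n N : ℕ) (hn1 : 1 ≤ n) (hnN : n ≤ N)
    (p : List (P1 Γ)) (hlen : p.length = N)
    (hk : ∀ j : Fin p.length, (p.get j).1 = (j : ℕ) + 1)
    (zn : Γ) (hz : p[n - 1]? = some (n, zn)) :
    p.foldl (fun g pj => (e1 T g pj).1) ((q, T.start, -1, n, N) : G1 Q) =
      (q, (T.δ q zn).1, (T.δ q zn).2.2, n, N) := by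
  obtain ⟨hlt, hget⟩ := List.getElem?_eq_some_iff.mp hz
  have hidx : ∀ (i : ℕ) (hi : i < p.length), (p[i]).1 = i + 1 := fun i hi => hk ⟨i, hi⟩
  have hsplit : p = p.take (n - 1) ++ (n, zn) :: p.drop n := by
    conv_lhs => rw [← List.take_append_drop (n - 1) p, List.drop_eq_getElem_cons hlt, hget,
      Nat.sub_add_cancel hn1]
  have hbefore : ∀ x ∈ p.take (n - 1), x.1 ≠ n := by
    intro x hx
    obtain ⟨i, hi, rfl⟩ := List.mem_iff_getElem.mp hx
    rw [List.length_take] at hi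
    rw [List.getElem_take, hidx]
    omega
  have hafter : ∀ x ∈ p.drop n, x.1 ≠ n := by
    intro x hx
    obtain ⟨i, hi, rfl⟩ := List.mem_iff_getElem.mp hx
    rw [List.getElem_drop, hidx]
    omega
  have hstep : (e1 T ((q, T.start, -1, n, N) : G1 Q) (n, zn)).1 =
      (q, (T.δ q zn).1, (T.δ q zn).2.2, n, N) := by
    have hd : max (-1) (T.δ q zn).2.2 = (T.δ q zn).2.2 := by
      rcases T.dir_valid q zn with h | h <;> simp [h]
    -- Both branches on `m + d̄ ≤ M` produce the same global variable.
    unfold e1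
    simp only [if_true, apply_ite Prod.fst, ite_self, max_eq_right (hstart _), hd]
  rw [hsplit, List.foldl_append, foldl_e1_of_ne T _ (p.take (n - 1)) hbefore, List.foldl_cons, hstep,
    foldl_e1_of_ne T _ (p.drop n) hafter]
end

section
/- In the first construction, let g = (q, start, -1, n, N) with 1 ≤ n ≤ N and let p = (p_1, …, p_N) be a particle tuple with k_j = j for every j. Write (q̄_n, z̄_n, d̄_n) = δ(q, z_n). If n + d̄_n ≤ N, then the concatenation ₂e(g, p_1) ∘ ⋯ ∘ ₂e(g, p_N) equals (p_1, …, p_{n-1}, (n, z̄_n), p_{n+1}, …, p_N). If n + d̄_n > N (equivalently, n = N and d̄_N = +1), then the concatenation equals (p_1, …, p_{N-1}, (N, z̄_N), (N+1, ␣)). -/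
/-- On particles away from the head cell, the concatenated evolve outputs reproduce the tuple. -/
theorem flatMap_e1_of_index_ne {Q Γ : Type} [LinearOrder Q] (T : KTM Q Γ) (g : G1 Q)
    (l : List (P1 Γ)) (h : ∀ x ∈ l, x.1 ≠ g.2.2.2.1) :
    l.flatMap (fun pj => (e1 T g pj).2) = l := by
  induction l with
  | nil => rfl
  | cons a l ih =>
    have ha : (e1 T g a).2 = [a] := by simp [e1, h a (by simp)]
    rw [List.flatMap_cons, ha, ih fun x hx => h x (by simp [hx])]
    rfl

/-- In the first construction, for `g = (q, start, -1, n, N)`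
with `1 ≤ n ≤ N` and a particle tuple `p` of length `N` with `k_j = j`, and
`(q̄_n, z̄_n, d̄_n) = δ(q, z_n)`: if `n + d̄_n ≤ N` then the concatenation
`₂e(g,p_1) ∘ ⋯ ∘ ₂e(g,p_N)` equals `p` with its `n`-th entry replaced by
`(n, z̄_n)`; and if `n + d̄_n > N` then it equals `p` with its `n`-th entry
replaced by `(n, z̄_n)` and a new particle `(n+1, ␣)` appended. -/
theorem e1_concat_particles {Q Γ : Type} [LinearOrder Q] (T : KTM Q Γ)
    (hstart : ∀ q : Q, T.start ≤ q)
    (q : Q) (n N : ℕ) (hn1 : 1 ≤ n) (hnN : n ≤ N)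
    (p : List (P1 Γ)) (hlen : p.length = N)
    (hk : ∀ j : Fin p.length, (p.get j).1 = (j : ℕ) + 1)
    (zn : Γ) (hz : p[n - 1]? = some (n, zn)) :
    (((n : ℤ) + (T.δ q zn).2.2 ≤ (N : ℤ)) →
      p.flatMap (fun pj => (e1 T ((q, T.start, -1, n, N) : G1 Q) pj).2) =
        p.set (n - 1) (n, (T.δ q zn).2.1)) ∧
    (((N : ℤ) < (n : ℤ) + (T.δ q zn).2.2) →
      p.flatMap (fun pj => (e1 T ((q, T.start, -1, n, N) : G1 Q) pj).2) =
        p.set (n - 1) (n, (T.δ q zn).2.1) ++ [(n + 1, T.blank)]) := by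
  obtain ⟨hlt, hget⟩ := List.getElem?_eq_some_iff.mp hz
  have hidx : ∀ (j : ℕ) (hj : j < p.length), (p[j]).1 = j + 1 := fun j hj => hk ⟨j, hj⟩
  have hA : ∀ x ∈ p.take (n - 1), x.1 ≠ n := by
    intro x hx
    obtain ⟨j, hj, rfl⟩ := List.mem_iff_getElem.mp hx
    rw [List.length_take] at hj
    rw [List.getElem_take, hidx]
    omega
  have hB : ∀ x ∈ p.drop n, x.1 ≠ n := by
    intro x hx
    obtain ⟨j, hj, rfl⟩ := List.mem_iff_getElem.mp hx
    rw [List.getElem_drop, hidx]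
    omega
  have hsplit : p = p.take (n - 1) ++ (n, zn) :: p.drop n := by
    have h := List.drop_eq_getElem_cons hlt
    rw [hget, Nat.sub_add_cancel hn1] at h
    rw [← h, List.take_append_drop]
  have hflat : p.flatMap (fun pj => (e1 T ((q, T.start, -1, n, N) : G1 Q) pj).2) =
      p.take (n - 1) ++ ((e1 T ((q, T.start, -1, n, N) : G1 Q) (n, zn)).2 ++ p.drop n) := by
    conv_lhs => rw [hsplit]
    rw [List.flatMap_append, List.flatMap_cons, flatMap_e1_of_index_ne T _ _ hA,
      flatMap_e1_of_index_ne T _ _ hB]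
  have hset : p.set (n - 1) (n, (T.δ q zn).2.1) =
      p.take (n - 1) ++ (n, (T.δ q zn).2.1) :: p.drop n := by
    rw [List.set_eq_take_append_cons_drop, if_pos hlt, Nat.sub_add_cancel hn1]
  rw [hflat, hset]
  refine ⟨fun hd => ?_, fun hd => ?_⟩
  · simp [e1, hd]
  · have hnil : p.drop n = [] := by
      rw [List.drop_eq_nil_iff]
      rcases T.dir_valid q zn with h | h <;> omega
    simp [e1, not_le.mpr hd, hnil]
end

section
/- For the interact function i of the second construction, for all g ∈ G and particles p_j, p_k, p_{k'} ∈ P: ₁i_g(p_j, ₁i_g(p_k, p_{k'})) = ₁i_g(p_j, p_k) (the interact function is independent of previous interactions). -/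
/-- The first component of an interaction depends on its second argument only through
the fields `z`, `h` and `o`. -/
lemma i2_fst_congr {Q Γ : Type} (T : KTM Q Γ) (g : G2 Q) (pj : P2 Γ) {p p' : P2 Γ}
    (hz : p.1 = p'.1) (hh : hOf p = hOf p') (ho : oOf p = oOf p') :
    (i2 T g pj p).1 = (i2 T g pj p').1 := by
  unfold i2
  rw [hz, hh, ho]
  split_ifs <;> rfl

/-- An interaction changes at most the fields `Δh`, `Δo` and `a` of its first argument. -/
lemma i2_fst_fields {Q Γ : Type} (T : KTM Q Γ) (g : G2 Q) (p p' : P2 Γ) :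
    (i2 T g p p').1.1 = p.1 ∧ hOf (i2 T g p p').1 = hOf p ∧ oOf (i2 T g p p').1 = oOf p := by
  unfold i2
  split_ifs <;> exact ⟨rfl, rfl, rfl⟩

/-- The interact function of the second construction is
independent of previous interactions:
`₁i_g(p_j, ₁i_g(p_k, p_{k'})) = ₁i_g(p_j, p_k)`. -/
theorem i2_independent_of_previous {Q Γ : Type} [LinearOrder Q] (T : KTM Q Γ)
    (hstart : ∀ q : Q, T.start ≤ q)
    (g : G2 Q) (pj pk pk' : P2 Γ) :
    (i2 T g pj (i2 T g pk pk').1).1 = (i2 T g pj pk).1 := by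
  obtain ⟨hz, hh, ho⟩ := i2_fst_fields T g pk pk'
  exact i2_fst_congr T g pj hz hh ho
end

section
/- For the interact function i of the second construction, for all g ∈ G and particles p_j, p_k, p_{k'} ∈ P: ₁i_g(₁i_g(p_j, p_k), p_{k'}) = ₁i_g(₁i_g(p_j, p_{k'}), p_k) (order-independence of the interact function). -/
/-- The interact function of the second construction is
order-independent: `₁i_g(₁i_g(p_j, p_k), p_{k'}) = ₁i_g(₁i_g(p_j, p_{k'}), p_k)`. -/
theorem i2_order_independent {Q Γ : Type} [LinearOrder Q] (T : KTM Q Γ)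
    (hstart : ∀ q : Q, T.start ≤ q)
    (g : G2 Q) (pj pk pk' : P2 Γ) :
    (i2 T g (i2 T g pj pk).1 pk').1 = (i2 T g (i2 T g pj pk').1 pk).1 := by
  obtain ⟨z, h, dh, o, dO, a⟩ := pj
  by_cases hj : h = 1
  · -- Only the case setting `a` to `1` can apply.
    subst hj
    simp only [i2, hOf, dhOf, oOf, doOf, aOf]
    split_ifs <;> simp_all
  · -- Only the case updating `Δh` and `Δo` can apply.
    simp only [i2, hOf, dhOf, oOf, doOf, aOf, hj, false_and, if_false]
    split_ifs <;> simp_all [max_right_comm]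
end

section
/- For the evolve function e of the second construction and all g ∈ G and particles p', p'' ∈ P: ₁e(₁e(g, p'), p'') = ₁e(₁e(g, p''), p') (order-independence of the evolve function with respect to the global variable). -/
/-- The global component of `e2` leaves `q` fixed and joins to `Δq` a state that depends only
on `q` and the particle. Particles that do not trigger a transition contribute `start`, which is
neutral for `max` because it is the minimum of the order. -/
lemma e2_fst_eq {Q Γ : Type} [LinearOrder Q] (T : KTM Q Γ) (hstart : ∀ q : Q, T.start ≤ q)
    (g : G2 Q) (p : P2 Γ) :
    (e2 T g p).1 = (g.1, max g.2
      (if dhOf p = 0 ∧ hOf p = 1 ∧ (aOf p = 1 ∨ aOf p = 0) then (T.δ g.1 p.1).1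
        else T.start)) := by
  have hmax : max g.2 T.start = g.2 := max_eq_left (hstart _)
  unfold e2
  split_ifs <;> simp_all

/-- The evolve function of the second construction is
order-independent with respect to the global variable:
`₁e(₁e(g, p'), p'') = ₁e(₁e(g, p''), p')`. -/
theorem e2_order_independent {Q Γ : Type} [LinearOrder Q] (T : KTM Q Γ)
    (hstart : ∀ q : Q, T.start ≤ q)
    (g : G2 Q) (p' p'' : P2 Γ) :
    (e2 T (e2 T g p').1 p'').1 = (e2 T (e2 T g p'').1 p').1 := by
  simp only [e2_fst_eq T hstart, max_right_comm]
end
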